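/- Let U : H²(𝔻) → H²(𝔻) be the bounded linear operator determined by U(1) = 1, U(z) = √2·z, U(z²) = √2·z², and U(zⁿ) = zⁿ for n ≥ 3, and let M = span{1 + z, z + z²} with norm ‖f‖_M := ‖Uf‖₂. Then M ∩ zH²(𝔻) = span{z + z²}; the orthogonal complement M ⊖ (M ∩ zH²(𝔻)) in M is spanned by g(z) = (z − 2)(z + 1)/(2√2), which satisfies ‖g‖_M = 1; the function f(z) = 2√2/(z − 2) belongs to H²(𝔻) and satisfies 1 + z = g·f pointwise on 𝔻; and ‖1 + z‖²_M = 3 while ‖f‖²₂ = 8/3, so that ‖1 + z‖_M > ‖f‖₂ (the norm equality of Hitt's theorem fails in the contractively contained setting). -/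

import Mathlib

noncomputable section
open scoped ENNReal

/-- The Hardy space `H²(𝔻)`, identified isometrically with the space of square-summable
sequences of Taylor coefficients; `lp.single 2 n 1` corresponds to `zⁿ`. -/
abbrev H2 := lp (fun _ : ℕ => ℂ) 2

/-- The value at `z ∈ 𝔻` of `f ∈ H²(𝔻)`. -/
def ev (f : H2) (z : ℂ) : ℂ := ∑' m, f m * z ^ m

/-- `1 + z` as an element of `H²(𝔻)`. -/
def p1 : H2 := lp.single 2 0 1 + lp.single 2 1 1

/-- `z + z²` as an element of `H²(𝔻)`. -/
def p2 : H2 := lp.single 2 1 1 + lp.single 2 2 1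

/-- `g(z) = (z - 2)(z + 1)/(2√2) = (z² - z - 2)/(2√2)` as an element of `H²(𝔻)`. -/
def gg : H2 :=
  ((2 * Real.sqrt 2 : ℝ) : ℂ)⁻¹ •
    (lp.single 2 0 (-2) + lp.single 2 1 (-1) + lp.single 2 2 1)

/-- `f(z) = 2√2/(z - 2) = -√2 Σ_n (z/2)ⁿ` as an element of `H²(𝔻)`
(in particular, this function belongs to `H²(𝔻)`). -/
def ff : H2 :=
  ⟨fun n => -(Real.sqrt 2 : ℂ) * (2 : ℂ)⁻¹ ^ n, by
    apply memℓp_gen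
    have key : ∀ n : ℕ, ‖-(Real.sqrt 2 : ℂ) * (2 : ℂ)⁻¹ ^ n‖ ^ (2 : ℝ≥0∞).toReal
        = 2 * ((1 : ℝ) / 4) ^ n := by
      intro n
      have h1 : ‖-(Real.sqrt 2 : ℂ) * (2 : ℂ)⁻¹ ^ n‖ = Real.sqrt 2 * (1 / 2 : ℝ) ^ n := by
        rw [norm_mul, norm_neg, norm_pow]
        simp [Complex.norm_real, abs_of_nonneg (Real.sqrt_nonneg 2)]
      have h2 : ((2 : ℝ≥0∞).toReal) = (2 : ℕ) := by norm_num
      rw [h1, h2, Real.rpow_natCast, mul_pow, Real.sq_sqrt (by norm_num : (0:ℝ) ≤ 2),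
        ← pow_mul, mul_comm n 2, pow_mul]
      norm_num
    have hgeo : Summable fun n : ℕ => (2 : ℝ) * ((1 : ℝ) / 4) ^ n :=
      (summable_geometric_of_lt_one (by norm_num) (by norm_num)).mul_left 2
    exact (summable_congr key).2 hgeo⟩

/-! Both `M ∩ zH²` and its orthogonal complement in `M = span {1 + z, z + z²}` are kernels of
linear functionals on `M`: of `f ↦ f 0` for the former and, since the former is spanned by
`z + z²`, of `f ↦ ⟪U (z + z²), U f⟫` for the latter. The kernel in `span {p, q}` of a functional `φ`
with `φ q ≠ 0` is the line through `p - (φ p / φ q) q`. For the second functional this vector is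
`(1 + z) - (z + z²)/2 = (1 + z)(2 - z)/2`, which is proportional to `g`. -/

open Complex ComplexConjugate InnerProductSpace Submodule

theorem span_pair_inf_ker {K V : Type*} [Field K] [AddCommGroup V] [Module K V]
    (φ : V →ₗ[K] K) (p : V) {q : V} (hq : φ q ≠ 0) :
    span K {p, q} ⊓ LinearMap.ker φ = span K {p - (φ p / φ q) • q} := by
  ext x
  simp only [mem_inf, mem_span_pair, LinearMap.mem_ker, mem_span_singleton]
  constructor
  · rintro ⟨⟨a, b, rfl⟩, hx⟩
    have hb : b = -(a * (φ p / φ q)) := by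
      simp only [map_add, map_smul, smul_eq_mul] at hx
      field_simp
      linear_combination hx
    exact ⟨a, by rw [hb]; module⟩
  · rintro ⟨a, rfl⟩
    refine ⟨⟨a, -(a * (φ p / φ q)), by module⟩, ?_⟩
    simp [div_mul_cancel₀ _ hq]

theorem lp_norm_sq_eq_tsum {ι : Type*} {G : ι → Type*} [∀ i, NormedAddCommGroup (G i)]
    (f : lp G 2) : ‖f‖ ^ 2 = ∑' i, ‖f i‖ ^ 2 := by
  simpa using lp.norm_rpow_eq_tsum (p := 2) (by norm_num) f

theorem orthonormal_lp_single {ι 𝕜 : Type*} [DecidableEq ι] [RCLike 𝕜] :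
    Orthonormal 𝕜 fun i ↦ (lp.single 2 i 1 : lp (fun _ : ι ↦ 𝕜) 2) := by
  rw [orthonormal_iff_ite]
  intro i j
  simp [lp.inner_single_left, Pi.single_apply]

theorem ev_eq_sum_range {f : H2} {N : ℕ} (hf : ∀ n, N ≤ n → f n = 0) (z : ℂ) :
    ev f z = ∑ n ∈ Finset.range N, f n * z ^ n :=
  tsum_eq_sum fun n hn ↦ by rw [hf n (by simpa using hn), zero_mul]

/-- The polynomial `a + bz + cz²` as an element of `H²(𝔻)`, the common shape of `p1`, `p2` and
`gg`. -/
def quadratic (a b c : ℂ) : H2 := lp.single 2 0 a + lp.single 2 1 b + lp.single 2 2 c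

theorem quadratic_apply (a b c : ℂ) (n : ℕ) :
    quadratic a b c n = if n = 0 then a else if n = 1 then b else if n = 2 then c else 0 := by
  rcases n with _ | _ | _ | n <;> simp [quadratic]

theorem smul_quadratic (k a b c : ℂ) :
    k • quadratic a b c = quadratic (k * a) (k * b) (k * c) := by
  simp only [quadratic, smul_add, ← lp.single_smul, smul_eq_mul]

theorem quadratic_sub (a b c a' b' c' : ℂ) :
    quadratic a b c - quadratic a' b' c' = quadratic (a - a') (b - b') (c - c') := by
  simp only [quadratic, lp.single_sub]
  abel

theorem ev_quadratic (a b c z : ℂ) : ev (quadratic a b c) z = a + b * z + c * z ^ 2 := by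
  have h_coeff : ∀ n, 3 ≤ n → quadratic a b c n = 0 := fun n hn ↦ by
    rw [quadratic_apply, if_neg (by lia), if_neg (by lia), if_neg (by lia)]
  simp [ev_eq_sum_range h_coeff, Finset.sum_range_succ, quadratic_apply]

theorem p1_eq_quadratic : p1 = quadratic 1 1 0 := by simp [p1, quadratic]

theorem p2_eq_quadratic : p2 = quadratic 0 1 1 := by simp [p2, quadratic]

theorem gg_eq_smul_quadratic : gg = ((2 * √2 : ℝ) : ℂ)⁻¹ • quadratic (-2) (-1) 1 := rfl

theorem gg_eq_smul_sub : gg = (-2 * ((2 * √2 : ℝ) : ℂ)⁻¹) • (p1 - (1 / 2 : ℂ) • p2) := by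
  rw [gg_eq_smul_quadratic, p1_eq_quadratic, p2_eq_quadratic, smul_quadratic, smul_quadratic,
    quadratic_sub, smul_quadratic]
  congr 1 <;> ring

theorem setOf_mem_span_vanishing :
    {f : H2 | f ∈ span ℂ {p1, p2} ∧ f 0 = 0} = (span ℂ {p2} : Submodule ℂ H2) := by
  let φ : H2 →ₗ[ℂ] ℂ := lp.evalₗ (fun _ : ℕ ↦ ℂ) 2 0
  have h_p1 : φ p1 = 1 := by simp [φ, p1_eq_quadratic, quadratic_apply]
  have h_p2 : φ p2 = 0 := by simp [φ, p2_eq_quadratic, quadratic_apply]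
  have h_ker := span_pair_inf_ker φ p2 (q := p1) (by simp [h_p1])
  rw [h_p2, zero_div, zero_smul, sub_zero, Set.pair_comm] at h_ker
  exact congrArg SetLike.coe h_ker

theorem span_singleton_gg_eq : span ℂ {gg} = span ℂ {p1 - (1 / 2 : ℂ) • p2} := by
  rw [gg_eq_smul_sub]
  exact span_singleton_smul_eq (by simp) _

theorem gg_mem_span : gg ∈ span ℂ {p1, p2} :=
  mem_span_pair.2 ⟨-2 * ((2 * √2 : ℝ) : ℂ)⁻¹, ((2 * √2 : ℝ) : ℂ)⁻¹, by
    rw [gg_eq_smul_sub]; module⟩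

section WeightedInner

variable {F : Type*} [NormedAddCommGroup F] [InnerProductSpace ℂ F] {e : Fin 3 → F}
  (he : Orthonormal ℂ e) {U : H2 →ₗ[ℂ] F} (hU0 : U (lp.single 2 0 1) = e 0)
  (hU1 : U (lp.single 2 1 1) = (√2 : ℂ) • e 1) (hU2 : U (lp.single 2 2 1) = (√2 : ℂ) • e 2)

include he hU0 hU1 hU2

theorem inner_map_quadratic (a b c a' b' c' : ℂ) :
    ⟪U (quadratic a b c), U (quadratic a' b' c')⟫_ℂ =
      conj a * a' + 2 * (conj b * b') + 2 * (conj c * c') := by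
  have h_sqrt : (√2 : ℂ) * √2 = 2 := by
    exact_mod_cast Real.mul_self_sqrt zero_le_two
  have h_map (x y w : ℂ) : U (quadratic x y w) = ∑ i, ![x, √2 * y, √2 * w] i • e i := by
    have h_single (n : ℕ) (k : ℂ) : (lp.single 2 n k : H2) = k • lp.single 2 n 1 := by
      rw [← lp.single_smul, smul_eq_mul, mul_one]
    rw [quadratic, h_single 0, h_single 1, h_single 2]
    simp only [map_add, map_smul, hU0, hU1, hU2, Fin.sum_univ_three, Matrix.cons_val, smul_smul,
      mul_comm]
  rw [h_map, h_map, he.inner_sum]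
  simp only [Fin.sum_univ_three, Matrix.cons_val, map_mul, conj_ofReal]
  linear_combination (conj b * b' + conj c * c') * h_sqrt

theorem norm_map_quadratic_sq (a b c : ℂ) :
    ‖U (quadratic a b c)‖ ^ 2 = ‖a‖ ^ 2 + 2 * ‖b‖ ^ 2 + 2 * ‖c‖ ^ 2 := by
  have h := inner_map_quadratic he hU0 hU1 hU2 a b c a b c
  rw [inner_self_eq_norm_sq_to_K, conj_mul', conj_mul', conj_mul'] at h
  apply ofReal_injective
  push_cast
  exact h

theorem norm_map_gg : ‖U gg‖ = 1 := by
  rw [← sq_eq_sq₀ (norm_nonneg _) zero_le_one, gg_eq_smul_quadratic, map_smul, norm_smul, mul_pow,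
    norm_map_quadratic_sq he hU0 hU1 hU2, norm_inv, inv_pow, norm_real, Real.norm_eq_abs, sq_abs,
    mul_pow, Real.sq_sqrt zero_le_two]
  norm_num

theorem setOf_mem_span_inner_map_p2_eq_zero :
    {f : H2 | f ∈ span ℂ {p1, p2} ∧ ⟪U p2, U f⟫_ℂ = 0} = (span ℂ {gg} : Submodule ℂ H2) := by
  let φ : H2 →ₗ[ℂ] ℂ := innerₛₗ ℂ (U p2) ∘ₗ U
  have h_p1 : φ p1 = 2 := by
    simp [φ, p1_eq_quadratic, p2_eq_quadratic, inner_map_quadratic he hU0 hU1 hU2]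
  have h_p2 : φ p2 = 4 := by
    change ⟪U p2, U p2⟫_ℂ = 4
    rw [p2_eq_quadratic, inner_map_quadratic he hU0 hU1 hU2]
    norm_num
  have h_ker := span_pair_inf_ker φ p1 (q := p2) (by simp [h_p2])
  rw [h_p1, h_p2, show (2 / 4 : ℂ) = 1 / 2 by norm_num, ← span_singleton_gg_eq] at h_ker
  exact congrArg SetLike.coe h_ker

theorem setOf_mem_span_orthogonal_vanishing :
    {f : H2 | f ∈ span ℂ {p1, p2} ∧ ∀ h ∈ span ℂ {p1, p2}, h 0 = 0 → ⟪U f, U h⟫_ℂ = 0} =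
      (span ℂ {gg} : Submodule ℂ H2) := by
  rw [← setOf_mem_span_inner_map_p2_eq_zero he hU0 hU1 hU2]
  ext f
  refine and_congr_right fun _ ↦ ?_
  have h_vanishing (h : H2) : h ∈ span ℂ {p1, p2} ∧ h 0 = 0 ↔ h ∈ span ℂ {p2} :=
    Set.ext_iff.1 setOf_mem_span_vanishing h
  simp only [← and_imp, h_vanishing, mem_span_singleton, forall_exists_index,
    forall_apply_eq_imp_iff, map_smul, inner_smul_right]
  rw [inner_eq_zero_symm]
  exact ⟨fun h ↦ by simpa using h 1, fun h k ↦ by rw [h, mul_zero]⟩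

end WeightedInner

theorem ff_apply (n : ℕ) : ff n = -(√2 : ℂ) * (2 : ℂ)⁻¹ ^ n := rfl

theorem norm_ff_sq : ‖ff‖ ^ 2 = 8 / 3 := by
  have h_coeff (n : ℕ) : ‖ff n‖ ^ 2 = 2 * (1 / 4 : ℝ) ^ n := by
    rw [ff_apply, norm_mul, norm_neg, norm_real, Real.norm_eq_abs, mul_pow, sq_abs,
      Real.sq_sqrt zero_le_two, norm_pow, norm_inv, norm_ofNat, pow_right_comm]
    norm_num
  rw [lp_norm_sq_eq_tsum, tsum_congr h_coeff, tsum_mul_left,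
    tsum_geometric_of_lt_one (by norm_num) (by norm_num)]
  norm_num

theorem ev_ff {z : ℂ} (hz : ‖z‖ < 2) : ev ff z = 2 * (√2 : ℂ) / (z - 2) := by
  have h_term (n : ℕ) : ff n * z ^ n = -(√2 : ℂ) * (z / 2) ^ n := by
    rw [ff_apply, div_eq_inv_mul, mul_pow, mul_assoc]
  have h_ratio : ‖z / 2‖ < 1 := by
    rw [norm_div, norm_ofNat]
    linarith
  have h_ne : z - 2 ≠ 0 := sub_ne_zero.2 fun h ↦ by simp [h] at hz
  have h_ne' : 2 - z ≠ 0 := sub_ne_zero.2 (sub_ne_zero.1 h_ne).symm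
  rw [ev, tsum_congr h_term, tsum_mul_left, tsum_geometric_of_norm_lt_one h_ratio]
  field_simp
  ring

theorem ev_p1_eq_ev_gg_mul_ev_ff {z : ℂ} (hz : ‖z‖ < 2) : ev p1 z = ev gg z * ev ff z := by
  have h_ne : z - 2 ≠ 0 := sub_ne_zero.2 fun h ↦ by simp [h] at hz
  have h_gg : ev gg z = (z - 2) * (z + 1) / (2 * (√2 : ℂ)) := by
    rw [gg_eq_smul_quadratic, smul_quadratic, ev_quadratic]
    push_cast
    ring
  rw [h_gg, ev_ff hz, p1_eq_quadratic, ev_quadratic]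
  field_simp
  ring

theorem stmt11_general {F : Type*} [NormedAddCommGroup F] [InnerProductSpace ℂ F]
    {e : Fin 3 → F} (he : Orthonormal ℂ e) (U : H2 →ₗ[ℂ] F)
    (hU0 : U (lp.single 2 0 1) = e 0)
    (hU1 : U (lp.single 2 1 1) = (√2 : ℂ) • e 1)
    (hU2 : U (lp.single 2 2 1) = (√2 : ℂ) • e 2)
    (M : Submodule ℂ H2) (hM : M = span ℂ {p1, p2}) :
    {f : H2 | f ∈ M ∧ f 0 = 0} = (span ℂ {p2} : Submodule ℂ H2) ∧
    gg ∈ M ∧ ‖U gg‖ = 1 ∧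
    {f : H2 | f ∈ M ∧ ∀ h ∈ M, h 0 = 0 → ⟪U f, U h⟫_ℂ = 0} =
      (span ℂ {gg} : Submodule ℂ H2) ∧
    (∀ z ∈ Metric.ball (0 : ℂ) 1, ev p1 z = ev gg z * ev ff z) ∧
    ‖U p1‖ ^ 2 = 3 ∧ ‖ff‖ ^ 2 = 8 / 3 ∧ ‖ff‖ < ‖U p1‖ := by
  subst hM
  have h_p1 : ‖U p1‖ ^ 2 = 3 := by
    rw [p1_eq_quadratic, norm_map_quadratic_sq he hU0 hU1 hU2]
    norm_num
  have h_lt : ‖ff‖ < ‖U p1‖ :=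
    lt_of_pow_lt_pow_left₀ 2 (norm_nonneg _) (by rw [norm_ff_sq, h_p1]; norm_num)
  have h_factor (z : ℂ) (hz : z ∈ Metric.ball 0 1) : ev p1 z = ev gg z * ev ff z :=
    ev_p1_eq_ev_gg_mul_ev_ff ((mem_ball_zero_iff.1 hz).trans one_lt_two)
  exact ⟨setOf_mem_span_vanishing, gg_mem_span, norm_map_gg he hU0 hU1 hU2,
    setOf_mem_span_orthogonal_vanishing he hU0 hU1 hU2, h_factor, h_p1, norm_ff_sq, h_lt⟩

/- STATEMENT 11: With U and M = span{1 + z, z + z²} (norm ‖f‖_M = ‖Uf‖₂) as in Example 3.7: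
M ∩ zH²(𝔻) = span{z + z²}; M ⊖ (M ∩ zH²(𝔻)) is spanned by g(z) = (z-2)(z+1)/(2√2), which
has ‖g‖_M = 1; f(z) = 2√2/(z-2) ∈ H²(𝔻) satisfies 1 + z = g·f on 𝔻; and ‖1+z‖²_M = 3,
‖f‖²₂ = 8/3, so ‖1+z‖_M > ‖f‖₂. -/
theorem stmt11
    (U : H2 →L[ℂ] H2)
    (hU0 : U (lp.single 2 0 1) = lp.single 2 0 1)
    (hU1 : U (lp.single 2 1 1) = (Real.sqrt 2 : ℂ) • lp.single 2 1 1)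
    (hU2 : U (lp.single 2 2 1) = (Real.sqrt 2 : ℂ) • lp.single 2 2 1)
    (hUn : ∀ n : ℕ, 3 ≤ n → U (lp.single 2 n 1) = lp.single 2 n 1)
    (M : Submodule ℂ H2)
    (hM : M = Submodule.span ℂ {p1, p2}) :
    -- M ∩ zH²(𝔻) = span{z + z²} :
    {f : H2 | f ∈ M ∧ f 0 = 0} = (Submodule.span ℂ {p2} : Submodule ℂ H2) ∧
    -- M ⊖ (M ∩ zH²(𝔻)) = span{g} (orthogonality in the inner product of M, which is
    -- ⟪f, h⟫_M = ⟪Uf, Uh⟫₂), and ‖g‖_M = 1 :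
    gg ∈ M ∧ ‖U gg‖ = 1 ∧
    {f : H2 | f ∈ M ∧ ∀ h ∈ M, h 0 = 0 → inner (𝕜 := ℂ) (U f) (U h) = 0}
      = (Submodule.span ℂ {gg} : Submodule ℂ H2) ∧
    -- 1 + z = g·f pointwise on 𝔻 :
    (∀ z ∈ Metric.ball (0 : ℂ) 1, ev p1 z = ev gg z * ev ff z) ∧
    -- ‖1 + z‖²_M = 3, ‖f‖²₂ = 8/3, and ‖1 + z‖_M > ‖f‖₂ :
    ‖U p1‖ ^ 2 = 3 ∧ ‖ff‖ ^ 2 = 8 / 3 ∧ ‖ff‖ < ‖U p1‖ :=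
  stmt11_general (orthonormal_lp_single.comp ((↑) : Fin 3 → ℕ) Fin.val_injective) U.toLinearMap
    hU0 hU1 hU2 M hM
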